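/- arXiv:2505.17523 — 2 statements merged into one kernel-verified Lean document; each statement's English description precedes it below -/
import Mathlib

section
/- If T ⊆ 𝔹 satisfies T̃ = T, then 𝒟_T equals the ℚ^{≥0}-cone generated by {h_β : β ∈ 𝔹 − T} ∪ {b_β, −b_β : β ∈ T}. -/
/- Setting: `B` is the finite nonempty set 𝔹 equipped with a permutation `σ` (Frobenius),
and `p` is a prime.  Weights live in `ℚ^𝔹 = (B → ℚ)`.  The orbits `𝔹_𝔭` of `σ` are the sets
`orbit σ β`, and for `T ⊆ 𝔹` we have `T_𝔭 = T ∩ orbit σ β`. -/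

open scoped Classical

noncomputable section

namespace GO

variable {B : Type*} [Fintype B] [DecidableEq B]

/-- The standard basis vector `e_β` of `ℚ^𝔹`. -/
def e (β : B) : B → ℚ := fun τ => if τ = β then 1 else 0

/-- `β'` lies in the `σ`-orbit of `β`. -/
def sameOrbit (σ : Equiv.Perm B) (β β' : B) : Prop := ∃ n : ℕ, (σ ^ n) β = β'

/-- The `σ`-orbit `𝔹_𝔭` of `β`. -/
def orbit (σ : Equiv.Perm B) (β : B) : Set B := {τ | sameOrbit σ β τ}

/-- `|𝔹_𝔭|`, the cardinality of the orbit of `β`. -/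
def orbitCard (σ : Equiv.Perm B) (β : B) : ℕ := (orbit σ β).ncard

/-- For `β`, `β'` in the same orbit: the unique `n` with `0 < n ≤ |𝔹_𝔭|` and `σ^n β' = β`,
realized as the least positive `n` with `σ^n β' = β`. -/
def steps (σ : Equiv.Perm B) (β' β : B) : ℕ := sInf {n : ℕ | 0 < n ∧ (σ ^ n) β' = β}

/-- For `β`, `β'` in the same orbit: the unique `n` with `0 ≤ n < |𝔹_𝔭|` and `σ^n β = β'`. -/
def steps0 (σ : Equiv.Perm B) (β β' : B) : ℕ := sInf {n : ℕ | (σ ^ n) β = β'}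

/-- `h_β^{β'} = -e_β + p^n e_{β'}` where `β = σ^n β'` with `0 < n ≤ |𝔹_𝔭|`. -/
def hvec (σ : Equiv.Perm B) (p : ℕ) (β β' : B) : B → ℚ :=
  -(e β) + ((p : ℚ) ^ steps σ β' β) • e β'

/-- `b_β^{β'} = e_β + p^n e_{β'}` where `β = σ^n β'` with `0 < n ≤ |𝔹_𝔭|`. -/
def bvec (σ : Equiv.Perm B) (p : ℕ) (β β' : B) : B → ℚ :=
  (e β) + ((p : ℚ) ^ steps σ β' β) • e β'

/-- `h_β = -e_β + p e_{σ⁻¹ β}`. -/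
def hsimple (σ : Equiv.Perm B) (p : ℕ) (β : B) : B → ℚ := -(e β) + (p : ℚ) • e (σ⁻¹ β)

/-- `b_β = e_β + p e_{σ⁻¹ β}`. -/
def bsimple (σ : Equiv.Perm B) (p : ℕ) (β : B) : B → ℚ := (e β) + (p : ℚ) • e (σ⁻¹ β)

/-- The `ℚ^{≥0}`-cone generated by a set `S` of vectors: all finite nonnegative rational
linear combinations of elements of `S`. -/
def cone {V : Type*} [AddCommMonoid V] [Module ℚ V] (S : Set V) : Set V :=
  {x | ∃ (n : ℕ) (c : Fin n → ℚ) (v : Fin n → V),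
    (∀ i, 0 ≤ c i) ∧ (∀ i, v i ∈ S) ∧ x = ∑ i, c i • v i}

/-- A chain in `T` (automatically contained in a single orbit, so this is the notion of a
chain in `T_𝔭` for `T_𝔭 ⊊ 𝔹_𝔭`): `C = {σ^{-i}β : 0 ≤ i ≤ m} ⊆ T` with `σβ ∉ T` and
`σ^{-m-1}β ∉ T`. -/
def IsChainIn (σ : Equiv.Perm B) (T : Set B) (C : Set B) : Prop :=
  ∃ (β : B) (m : ℕ), σ β ∉ T ∧ (σ⁻¹ ^ (m + 1)) β ∉ T ∧
    (∀ i ≤ m, (σ⁻¹ ^ i) β ∈ T) ∧ C = {τ | ∃ i ≤ m, τ = (σ⁻¹ ^ i) β}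

/-- `C̃` for a chain `C`: equals `C` if `m` is odd (i.e. `|C| = m+1` is even), and
`C ∪ {σ^{-m-1}β} = C ∪ σ⁻¹(C)` if `m` is even (i.e. `|C|` odd). -/
def chainExt (σ : Equiv.Perm B) (C : Set B) : Set B :=
  if Odd C.ncard then C ∪ (⇑σ⁻¹ '' C) else C

/-- `T̃ = ⋃_𝔭 T̃_𝔭`: the union of `T` with the extensions `C̃` of all chains `C` in `T`.
(For orbits with `T_𝔭 = 𝔹_𝔭` there are no chains and `T̃_𝔭 = 𝔹_𝔭 = T_𝔭`.) -/
def tilde (σ : Equiv.Perm B) (T : Set B) : Set B :=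
  T ∪ ⋃ (C : Set B) (_ : IsChainIn σ T C), chainExt σ C

/-- `μ_β`: the least `i > 0` with `σ^i β ∉ T` if `T_𝔭 ≠ 𝔹_𝔭`, and `0` if `T_𝔭 = 𝔹_𝔭`. -/
def mu (σ : Equiv.Perm B) (T : Set B) (β : B) : ℕ :=
  if orbit σ β ⊆ T then 0 else sInf {i : ℕ | 0 < i ∧ (σ ^ i) β ∉ T}

/-- `n_β`: the least `i > 0` with `σ^i β ∉ T̃` (meaningful when `T̃_𝔭 ≠ 𝔹_𝔭`). -/
def nn (σ : Equiv.Perm B) (T : Set B) (β : B) : ℕ :=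
  sInf {i : ℕ | 0 < i ∧ (σ ^ i) β ∉ tilde σ T}

/-- `ν_β`: the least `i ≥ 0` with `σ^{-i} β ∉ T` (meaningful when `T_𝔭 ≠ 𝔹_𝔭`). -/
def nu (σ : Equiv.Perm B) (T : Set B) (β : B) : ℕ :=
  sInf {i : ℕ | (σ⁻¹ ^ i) β ∉ T}

/-- `𝒯(T_𝔭) = (𝔹_𝔭 − T̃_𝔭) ∪ σ(T̃_𝔭 − T_𝔭)`, taken globally (union over all `𝔭`). -/
def Tscr (σ : Equiv.Perm B) (T : Set B) : Set B :=
  (tilde σ T)ᶜ ∪ (⇑σ '' (tilde σ T \ T))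

/-- The generating set `⋃_𝔭 𝒢(T_𝔭)`:
`{h_β^{β'} : β ∈ ℋ(T_𝔭), β' ∈ 𝒯(T_𝔭)} ∪ {±b_β : β ∈ T_𝔭}` over all `𝔭`. -/
def Dgen (σ : Equiv.Perm B) (p : ℕ) (T : Set B) : Set (B → ℚ) :=
  {v | ∃ β β', β ∉ T ∧ β' ∈ Tscr σ T ∧ sameOrbit σ β β' ∧ v = hvec σ p β β'}
  ∪ {v | ∃ β ∈ T, v = bsimple σ p β ∨ v = -(bsimple σ p β)}

/-- The cone `𝒟_T`. -/
def D (σ : Equiv.Perm B) (p : ℕ) (T : Set B) : Set (B → ℚ) := cone (Dgen σ p T)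

/-- `h_{σ^{n_β}β}^{β} = -e_{σ^{n_β}β} + p^{n_β} e_β`. -/
def fH (σ : Equiv.Perm B) (p : ℕ) (T : Set B) (β : B) : B → ℚ :=
  -(e ((σ ^ nn σ T β) β)) + ((p : ℚ) ^ nn σ T β) • e β

/-- `b_{σ^{n_β}β}^{β} = e_{σ^{n_β}β} + p^{n_β} e_β`. -/
def fB (σ : Equiv.Perm B) (p : ℕ) (T : Set B) (β : B) : B → ℚ :=
  (e ((σ ^ nn σ T β) β)) + ((p : ℚ) ^ nn σ T β) • e β

/-- The generating set `⋃_𝔭 𝒢′(T_𝔭)`: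
if `𝔹_𝔭 − T̃_𝔭 ≠ ∅` it is `{h_{σ^{n_β}β}^β : β ∈ 𝔹_𝔭 − T̃_𝔭} ∪ {−b_{σ^{n_β}β}^β : β ∈ T̃_𝔭 − T_𝔭}
∪ {±b_β : β ∈ T_𝔭}`, and if `𝔹_𝔭 = T̃_𝔭` it is `{−e_β : β ∈ 𝔹_𝔭 − T_𝔭} ∪ {±b_β : β ∈ T_𝔭}`. -/
def D'gen (σ : Equiv.Perm B) (p : ℕ) (T : Set B) : Set (B → ℚ) :=
  {v | ∃ β, β ∉ tilde σ T ∧ v = fH σ p T β}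
  ∪ {v | ∃ β, β ∈ tilde σ T ∧ β ∉ T ∧ ¬ orbit σ β ⊆ tilde σ T ∧ v = -(fB σ p T β)}
  ∪ {v | ∃ β, β ∉ T ∧ orbit σ β ⊆ tilde σ T ∧ v = -(e β)}
  ∪ {v | ∃ β ∈ T, v = bsimple σ p β ∨ v = -(bsimple σ p β)}

/-- The cone `𝒟′_T`. -/
def D' (σ : Equiv.Perm B) (p : ℕ) (T : Set B) : Set (B → ℚ) := cone (D'gen σ p T)

/-- `f_β(T)` for `β ∉ T`: `h_{σ^{n_β}β}^β` if `β ∈ 𝔹_𝔭 − T̃_𝔭`; `−b_{σ^{n_β}β}^β` if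
`β ∈ T̃_𝔭 − T_𝔭` and `𝔹_𝔭 ≠ T̃_𝔭`; and `−(1+p^{|𝔹_𝔭|}) e_β` if `𝔹_𝔭 = T̃_𝔭`. -/
def fvec (σ : Equiv.Perm B) (p : ℕ) (T : Set B) (β : B) : B → ℚ :=
  if orbit σ β ⊆ tilde σ T then -((1 + (p : ℚ) ^ orbitCard σ β) • e β)
  else if β ∈ tilde σ T then -(fB σ p T β) else fH σ p T β

/-- `𝔹(T) = ⋃_𝔭 𝔹_𝔭(T)`: `β ∈ 𝔹(T)` iff `β ∉ T`, the set `𝔹_𝔭 − T̃_𝔭` is nonempty, and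
`𝔹_𝔭 − T̃_𝔭 ≠ {β}` (this encodes all three cases of the definition of `𝔹_𝔭(T)`). -/
def BT (σ : Equiv.Perm B) (T : Set B) : Set B :=
  {β | β ∉ T ∧ (orbit σ β \ tilde σ T).Nonempty ∧ orbit σ β \ tilde σ T ≠ {β}}

/-- The sign function `ε_T : 𝔹 → {−1,0,1}`. -/
def epsT (σ : Equiv.Perm B) (T : Set B) (β : B) : ℚ :=
  if orbit σ β ⊆ T then 0
  else if β ∈ tilde σ T then (-1 : ℚ) ^ (mu σ T β - 1) else 1

/-- `L^ε[β, β'](κ) = Σ_{0 ≤ i ≤ n} ε(σ^iβ) p^i k_{σ^iβ}`, where `β' = σ^n β` with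
`0 ≤ n < |𝔹_𝔭|`. -/
def Lfun (σ : Equiv.Perm B) (p : ℕ) (ε : B → ℚ) (β β' : B) (κ : B → ℚ) : ℚ :=
  ∑ i ∈ Finset.range (steps0 σ β β' + 1), ε ((σ ^ i) β) * (p : ℚ) ^ i * κ ((σ ^ i) β)

/-- `L^ε[β] = L^ε[β, σ⁻¹β]`. -/
def Lfun1 (σ : Equiv.Perm B) (p : ℕ) (ε : B → ℚ) (β : B) (κ : B → ℚ) : ℚ :=
  Lfun σ p ε β (σ⁻¹ β) κ

/-- `L_{T,β}` for `β ∈ 𝔹 − T`: `L^{ε_T}[σ^{μ_β}β]` if `β ∈ 𝔹 − T̃`, and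
`L^{ε_T}[β, σ^{μ_β−1}β]` if `β ∈ T̃ − T`. -/
def LT (σ : Equiv.Perm B) (p : ℕ) (T : Set B) (β : B) (κ : B → ℚ) : ℚ :=
  if β ∈ tilde σ T then Lfun σ p (epsT σ T) β ((σ ^ (mu σ T β - 1)) β) κ
  else Lfun1 σ p (epsT σ T) ((σ ^ mu σ T β) β) κ

/-- `ε_{T,f_β}`: negates `ε_T` on `{β, σβ, …, σ^{μ_β−1}β}`. -/
def epsTf (σ : Equiv.Perm B) (T : Set B) (β τ : B) : ℚ :=
  if ∃ i < mu σ T β, τ = (σ ^ i) β then -(epsT σ T τ) else epsT σ T τ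

/-- `L_{T,f_β,τ}` for `β ∈ 𝔹(T)` and `τ ∈ 𝔹 − (T ∪ {σ^{n_β}β})`, with `β′ = σ^{n_β}β` and
`β̃ = σ^{μ_{β′}}β′`. -/
def LTf (σ : Equiv.Perm B) (p : ℕ) (T : Set B) (β τ : B) (κ : B → ℚ) : ℚ :=
  if τ = β then
    (if β ∈ tilde σ T then
      Lfun1 σ p (epsTf σ T β) ((σ ^ mu σ T ((σ ^ nn σ T β) β)) ((σ ^ nn σ T β) β)) κ
    else
      Lfun σ p (epsTf σ T β) β (σ⁻¹ ((σ ^ mu σ T ((σ ^ nn σ T β) β)) ((σ ^ nn σ T β) β))) κ)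
  else
    (if τ ∈ tilde σ T then LT σ p T τ κ
     else Lfun1 σ p (epsTf σ T β) ((σ ^ mu σ T τ) τ) κ)

/-- `𝒟_{T,f_β} = {κ : L_{T,f_β,τ}(κ) ≥ 0 for all τ ∈ 𝔹 − (T ∪ {σ^{n_β}β})}`. -/
def Df (σ : Equiv.Perm B) (p : ℕ) (T : Set B) (β : B) : Set (B → ℚ) :=
  {κ | ∀ τ, τ ∉ T → τ ≠ (σ ^ nn σ T β) β → 0 ≤ LTf σ p T β τ κ}

/-- `i_T : ℚ^𝔹 → ℚ^{𝔹−T}`, the linear map with `i_T(e_β) = 0` if `T_𝔭 = 𝔹_𝔭` and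
`i_T(e_β) = (−p)^{ν_β} e_{σ^{−ν_β}β}` otherwise. -/
def iT (σ : Equiv.Perm B) (p : ℕ) (T : Set B) (κ : B → ℚ) : {β : B // β ∉ T} → ℚ :=
  fun β₀ => ∑ β : B, κ β *
    (if orbit σ β ⊆ T then 0
     else if (σ⁻¹ ^ nu σ T β) β = β₀.1 then (-(p : ℚ)) ^ nu σ T β else 0)

/-- Restriction to `ℚ^{𝔹−T}` of a vector of `ℚ^𝔹` (used for vectors supported on `𝔹 − T`). -/
def res (T : Set B) (v : B → ℚ) : {β : B // β ∉ T} → ℚ := fun β => v β.1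

/-- The generating set `𝒢^{T-red}(T) = ⋃_𝔭 𝒢_𝔭^{T-red}(T)` of the reduced cone. -/
def Gred (σ : Equiv.Perm B) (p : ℕ) (T : Set B) : Set ({β : B // β ∉ T} → ℚ) :=
  {v | ∃ β, β ∉ tilde σ T ∧ v = res T (fH σ p T β)}
  ∪ {v | ∃ β, β ∈ tilde σ T ∧ β ∉ T ∧ ¬ orbit σ β ⊆ tilde σ T ∧ v = res T (-(fB σ p T β))}
  ∪ {v | ∃ β, β ∉ T ∧ orbit σ β ⊆ tilde σ T ∧ v = res T (-(e β))}

/-- The minimal cone `𝒞^min_T = i_T(𝒟_T ∩ ⋂_{β ∈ 𝔹(T)} 𝒟_{T,f_β}) ⊆ ℚ^{𝔹−T}`. -/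
def Cmin (σ : Equiv.Perm B) (p : ℕ) (T : Set B) : Set ({β : B // β ∉ T} → ℚ) :=
  iT σ p T '' (D σ p T ∩ {κ | ∀ β ∈ BT σ T, κ ∈ Df σ p T β})

/-- `g_β`: `b_β` if `β ∈ T_𝔭`; `−e_β` if `β ∈ T̃_𝔭 − T_𝔭` and `𝔹_𝔭 = T̃_𝔭`;
`−b_{σ^{n_β}β}^β` if `β ∈ T̃_𝔭 − T_𝔭` and `𝔹_𝔭 ≠ T̃_𝔭`; `h_{σ^{n_β}β}^β` if `β ∈ 𝔹_𝔭 − T̃_𝔭`. -/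
def gvec (σ : Equiv.Perm B) (p : ℕ) (T : Set B) (β : B) : B → ℚ :=
  if β ∈ T then bsimple σ p β
  else if orbit σ β ⊆ tilde σ T then -(e β)
  else if β ∈ tilde σ T then -(fB σ p T β)
  else fH σ p T β

/-- The map `σ̄ : β ↦ σ^{n_β} β`. -/
def sigbar (σ : Equiv.Perm B) (T : Set B) (β : B) : B := (σ ^ nn σ T β) β

/-- `h_β = -e_β + p e_{σ⁻¹β}` as an element of `ℤ^𝔹`. -/
def hZ (σ : Equiv.Perm B) (p : ℕ) (β : B) : B → ℤ :=
  fun τ => (if τ = β then -1 else 0) + (if τ = σ⁻¹ β then (p : ℤ) else 0)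

end GO

end

namespace GO
section
variable {B : Type*} [Fintype B] [DecidableEq B]

theorem cone_sub {V : Type*} [AddCommGroup V] [Module ℚ V] (S : Set V) {x} (h : x ∈ S) :
    x ∈ cone S :=
  ⟨1, fun _ => 1, fun _ => x, by simp, by simpa using h, by simp⟩

theorem cone_zero {V : Type*} [AddCommGroup V] [Module ℚ V] (S : Set V) : (0 : V) ∈ cone S :=
  ⟨0, Fin.elim0, Fin.elim0, fun i => i.elim0, fun i => i.elim0, by simp⟩

theorem cone_add {V : Type*} [AddCommGroup V] [Module ℚ V] {S : Set V} {x y : V}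
    (hx : x ∈ cone S) (hy : y ∈ cone S) : x + y ∈ cone S := by
  obtain ⟨n, c, v, hc, hv, rfl⟩ := hx
  obtain ⟨m, d, w, hd, hw, rfl⟩ := hy
  refine ⟨n + m, Fin.append c d, Fin.append v w, ?_, ?_, ?_⟩
  · intro i; refine Fin.addCases (fun i => ?_) (fun i => ?_) i
    · simpa using hc i
    · simpa using hd i
  · intro i; refine Fin.addCases (fun i => ?_) (fun i => ?_) i
    · simpa using hv i
    · simpa using hw i
  · rw [Fin.sum_univ_add]; simp

theorem cone_smul {V : Type*} [AddCommGroup V] [Module ℚ V] {S : Set V} {x : V} {a : ℚ}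
    (ha : 0 ≤ a) (hx : x ∈ cone S) : a • x ∈ cone S := by
  obtain ⟨n, c, v, hc, hv, rfl⟩ := hx
  refine ⟨n, fun i => a * c i, v, fun i => mul_nonneg ha (hc i), hv, ?_⟩
  rw [Finset.smul_sum]; simp [mul_smul]

theorem cone_min {V : Type*} [AddCommGroup V] [Module ℚ V] {S S' : Set V}
    (h : ∀ x ∈ S, x ∈ cone S') : cone S ⊆ cone S' := by
  rintro _ ⟨n, c, v, hc, hv, rfl⟩
  refine Finset.sum_induction _ (· ∈ cone S') (fun _ _ => cone_add) (cone_zero _) ?_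
  intro i _
  exact cone_smul (hc i) (h _ (hv i))

theorem cone_smul' {V : Type*} [AddCommGroup V] [Module ℚ V] {S : Set V} {x : V} (a : ℚ)
    (hx : x ∈ cone S) (hx' : -x ∈ cone S) : a • x ∈ cone S := by
  rcases le_total 0 a with h | h
  · exact cone_smul h hx
  · have := cone_smul (neg_nonneg.2 h) hx'
    simpa using this

theorem down (σ : Equiv.Perm B) (p : ℕ) (T : Set B) (S : Set (B → ℚ))
    (hS : ∀ β ∈ T, bsimple σ p β ∈ S ∧ -bsimple σ p β ∈ S) (γ : B) (a : ℚ) (j : ℕ)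
    (hj : ∀ i < j, (σ⁻¹ ^ i) γ ∈ T) :
    a • (e γ - (-(p : ℚ)) ^ j • e ((σ⁻¹ ^ j) γ)) ∈ cone S := by
  induction j with
  | zero => simpa using cone_zero S
  | succ j ih =>
    have h1 := ih (fun i hi => hj i (by omega))
    have h2 := hS _ (hj j (by omega))
    have h3 := cone_smul' (a * (-(p : ℚ)) ^ j) (cone_sub _ h2.1) (cone_sub _ h2.2)
    have h4 := cone_add h1 h3
    convert h4 using 1
    rw [bsimple, pow_succ' σ⁻¹ j, Equiv.Perm.mul_apply]
    module

theorem exists_first (σ : Equiv.Perm B) (T : Set B) (hT : tilde σ T = T) (β : B) (hβ : β ∉ T) :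
    ∃ j, (σ⁻¹ ^ (j + 1)) β ∉ T ∧ (∀ i < j, (σ⁻¹ ^ (i + 1)) β ∈ T) ∧ Even j := by
  have hex : ∃ j, (σ⁻¹ ^ (j + 1)) β ∉ T := by
    refine ⟨orderOf σ⁻¹ - 1, ?_⟩
    rw [Nat.sub_add_cancel (orderOf_pos _), pow_orderOf_eq_one]; simpa using hβ
  refine ⟨Nat.find hex, Nat.find_spec hex, fun i hi => by simpa using Nat.find_min hex hi, ?_⟩
  have h1 := Nat.find_spec hex
  have h2 : ∀ i < Nat.find hex, (σ⁻¹ ^ (i + 1)) β ∈ T :=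
    fun i hi => by simpa using Nat.find_min hex hi
  generalize Nat.find hex = j at h1 h2
  rcases j with _ | m
  · simp
  by_contra hodd
  apply h1
  have hs : ∀ i, (σ⁻¹ ^ (i + 1)) β = (σ⁻¹ ^ i) (σ⁻¹ β) := fun i => by
    rw [pow_succ, Equiv.Perm.mul_apply]
  simp only [hs] at h1 h2 ⊢
  set γ := σ⁻¹ β with hγ
  have hσγ : σ γ = β := by simp [hγ]
  have hch : IsChainIn σ T {τ | ∃ i ≤ m, τ = (σ⁻¹ ^ i) γ} :=
    ⟨γ, m, by rwa [hσγ], h1, fun i hi => h2 i (by omega), rfl⟩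
  have hcard : ({τ | ∃ i ≤ m, τ = (σ⁻¹ ^ i) γ} : Set B).ncard = m + 1 := by
    have : ({τ | ∃ i ≤ m, τ = (σ⁻¹ ^ i) γ} : Set B) =
        ((Finset.range (m + 1)).image (fun i => (σ⁻¹ ^ i) γ) : Finset B) := by
      ext τ; simp [Nat.lt_succ_iff, eq_comm]
    rw [this, Set.ncard_coe_finset, Finset.card_image_of_injOn, Finset.card_range]
    have key : ∀ a b, a < b → b ≤ m → (σ⁻¹ ^ a) γ ≠ (σ⁻¹ ^ b) γ := by
      intro a b hab hb heq
      obtain ⟨d, rfl⟩ : ∃ d, b = a + (d + 1) := ⟨b - a - 1, by omega⟩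
      rw [pow_add, Equiv.Perm.mul_apply] at heq
      have h3 := (σ⁻¹ ^ a).injective heq
      rw [pow_succ', Equiv.Perm.mul_apply] at h3
      have h4 : σ γ = (σ⁻¹ ^ d) γ := by
        conv_lhs => rw [h3]
        simp
      apply hβ
      rw [← hσγ, h4]
      exact h2 d (by omega)
    intro a ha b hb hab
    simp only [Finset.coe_range, Set.mem_Iio] at ha hb
    rcases lt_trichotomy a b with h | h | h
    · exact absurd hab (key a b h (by omega))
    · exact h
    · exact absurd hab.symm (key b a h (by omega))
  rw [← hT]
  refine Or.inr ?_
  simp only [Set.mem_iUnion]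
  refine ⟨_, hch, ?_⟩
  rw [chainExt, hcard, if_pos (by simpa using hodd)]
  refine Or.inr ⟨(σ⁻¹ ^ m) γ, ⟨m, le_rfl, rfl⟩, ?_⟩
  rw [pow_succ', Equiv.Perm.mul_apply]

theorem pow_inv_apply (σ : Equiv.Perm B) (n : ℕ) (β β' : B) :
    (σ ^ n) β' = β ↔ (σ⁻¹ ^ n) β = β' := by
  rw [inv_pow, Equiv.Perm.inv_eq_iff_eq, eq_comm]

theorem climb (σ : Equiv.Perm B) (p : ℕ) (T : Set B) (hT : tilde σ T = T) (S : Set (B → ℚ))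
    (hS : ∀ β ∈ T, bsimple σ p β ∈ S ∧ -bsimple σ p β ∈ S)
    (hS' : ∀ β, β ∉ T → hsimple σ p β ∈ S) (n : ℕ) :
    ∀ β, β ∉ T → 0 < n → (σ⁻¹ ^ n) β ∉ T →
      -(e β) + ((p : ℚ) ^ n) • e ((σ⁻¹ ^ n) β) ∈ cone S := by
  induction n using Nat.strong_induction_on with
  | _ n ih =>
  intro β hβ hn hβ'
  obtain ⟨j, h1, h2, h3⟩ := exists_first σ T hT β hβ
  have hs : ∀ i, (σ⁻¹ ^ (i + 1)) β = (σ⁻¹ ^ i) (σ⁻¹ β) := fun i => by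
    rw [pow_succ, Equiv.Perm.mul_apply]
  have hd := down σ p T S hS (σ⁻¹ β) (-p) j (fun i hi => by rw [← hs]; exact h2 i hi)
  have hb : -(e β) + ((p : ℚ) ^ (j + 1)) • e ((σ⁻¹ ^ (j + 1)) β) ∈ cone S := by
    convert cone_add (cone_sub _ (hS' β hβ)) hd using 1
    rw [hsimple, hs, h3.neg_pow]
    module
  rcases lt_trichotomy n (j + 1) with h | h | h
  · exact absurd (by have := h2 (n - 1) (by omega); rwa [Nat.sub_add_cancel hn] at this) hβ'
  · subst h; exact hb
  · obtain ⟨d, rfl⟩ : ∃ d, n = d + (j + 1) := ⟨n - (j + 1), by omega⟩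
    have hpd : (σ⁻¹ ^ (d + (j + 1))) β = (σ⁻¹ ^ d) ((σ⁻¹ ^ (j + 1)) β) := by
      rw [pow_add, Equiv.Perm.mul_apply]
    rw [hpd] at hβ' ⊢
    have := ih d (by omega) _ h1 (by omega) hβ'
    convert cone_add hb (cone_smul (a := (p : ℚ) ^ (j + 1)) (by positivity) this) using 1
    module

theorem steps_spec (σ : Equiv.Perm B) {β β' : B} (h : sameOrbit σ β β') :
    0 < steps σ β' β ∧ (σ ^ steps σ β' β) β' = β := by
  have hne : {n : ℕ | 0 < n ∧ (σ ^ n) β' = β}.Nonempty := by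
    obtain ⟨n, rfl⟩ := h
    refine ⟨n * (orderOf σ - 1) + orderOf σ, by have := orderOf_pos σ; omega, ?_⟩
    rw [← Equiv.Perm.mul_apply, ← pow_add]
    have : n * (orderOf σ - 1) + orderOf σ + n = orderOf σ * (n + 1) := by
      have := orderOf_pos σ
      obtain ⟨k, hk⟩ : ∃ k, orderOf σ = k + 1 := ⟨orderOf σ - 1, by omega⟩
      rw [hk]; simp; ring
    rw [this, pow_mul, pow_orderOf_eq_one]; simp
  exact Nat.sInf_mem hne

end
end GO

/-- If `T̃ = T`, then `𝒟_T` equals the `ℚ^{≥0}`-cone generated by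
`{h_β : β ∈ 𝔹 − T} ∪ {b_β, −b_β : β ∈ T}`. -/
theorem statement1 {B : Type*} [Fintype B] [DecidableEq B] [Nonempty B]
    (σ : Equiv.Perm B) (p : ℕ) (hp : p.Prime) (T : Set B)
    (hT : GO.tilde σ T = T) :
    GO.D σ p T =
      GO.cone ({v : B → ℚ | ∃ β, β ∉ T ∧ v = GO.hsimple σ p β}
        ∪ {v : B → ℚ | ∃ β ∈ T, v = GO.bsimple σ p β ∨ v = -(GO.bsimple σ p β)}) := by
  have hTs : GO.Tscr σ T = Tᶜ := by simp [GO.Tscr, hT]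
  apply Set.Subset.antisymm
  · apply GO.cone_min
    rintro x (⟨β, β', hβ, hβ', ho, rfl⟩ | hx)
    · rw [hTs] at hβ'
      obtain ⟨hs1, hs2⟩ := GO.steps_spec σ ho
      rw [GO.hvec]
      generalize GO.steps σ β' β = n at hs1 hs2
      rw [GO.pow_inv_apply] at hs2
      subst hs2
      exact GO.climb σ p T hT _
        (fun β hβ => ⟨Or.inr ⟨β, hβ, Or.inl rfl⟩, Or.inr ⟨β, hβ, Or.inr rfl⟩⟩)
        (fun β hβ => Or.inl ⟨β, hβ, rfl⟩) n β hβ hs1 hβ'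
    · exact GO.cone_sub _ (Or.inr hx)
  · apply GO.cone_min
    rintro x (⟨β, hβ, rfl⟩ | hx)
    · obtain ⟨j, h1, h2, h3⟩ := GO.exists_first σ T hT β hβ
      have hs : ∀ i, (σ⁻¹ ^ (i + 1)) β = (σ⁻¹ ^ i) (σ⁻¹ β) := fun i => by
        rw [pow_succ, Equiv.Perm.mul_apply]
      have hd := GO.down σ p T (GO.Dgen σ p T)
        (fun β hβ => ⟨Or.inr ⟨β, hβ, Or.inl rfl⟩, Or.inr ⟨β, hβ, Or.inr rfl⟩⟩)
        (σ⁻¹ β) p j (fun i hi => by rw [← hs]; exact h2 i hi)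
      have ho : GO.sameOrbit σ β ((σ⁻¹ ^ (j + 1)) β) := by
        refine ⟨(j + 1) * (orderOf σ - 1), ?_⟩
        rw [eq_comm, ← GO.pow_inv_apply, ← Equiv.Perm.mul_apply, ← pow_add]
        have : j + 1 + (j + 1) * (orderOf σ - 1) = orderOf σ * (j + 1) := by
          have := orderOf_pos σ
          obtain ⟨k, hk⟩ : ∃ k, orderOf σ = k + 1 := ⟨orderOf σ - 1, by omega⟩
          rw [hk]; simp; ring
        rw [this, pow_mul, pow_orderOf_eq_one]; simp
      have hst : GO.steps σ ((σ⁻¹ ^ (j + 1)) β) β = j + 1 := by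
        obtain ⟨hs1, hs2⟩ := GO.steps_spec σ ho
        apply le_antisymm
        · exact Nat.sInf_le ⟨by omega, (GO.pow_inv_apply σ _ _ _).2 rfl⟩
        · by_contra hlt
          generalize GO.steps σ ((σ⁻¹ ^ (j + 1)) β) β = n at hs1 hs2 hlt
          rw [GO.pow_inv_apply] at hs2
          apply h1
          rw [← hs2]
          have := h2 (n - 1) (by omega)
          rwa [Nat.sub_add_cancel hs1] at this
      have hg : GO.hvec σ p β ((σ⁻¹ ^ (j + 1)) β) ∈ GO.Dgen σ p T :=
        Or.inl ⟨β, _, hβ, by rw [hTs]; exact h1, ho, rfl⟩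
      convert GO.cone_add (GO.cone_sub _ hg) hd using 1
      rw [GO.hsimple, GO.hvec, hst, hs, h3.neg_pow]
      module
    · exact GO.cone_sub _ (Or.inr hx)
end

section
/- For every T ⊆ 𝔹, one has 𝒟_T = {κ ∈ ℚ^𝔹 : L_{T,β}(κ) ≥ 0 for all β ∈ 𝔹 − T}. -/
/- Setting: `B` is the finite nonempty set 𝔹 equipped with a permutation `σ` (Frobenius),
and `p` is a prime.  Weights live in `ℚ^𝔹 = (B → ℚ)`.  The orbits `𝔹_𝔭` of `σ` are the sets
`orbit σ β`, and for `T ⊆ 𝔹` we have `T_𝔭 = T ∩ orbit σ β`. -/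

open scoped Classical

namespace GO

theorem pw {B : Type*} (σ : Equiv.Perm B) (n m : ℕ) (x : B) :
    (σ ^ (n + m)) x = (σ ^ n) ((σ ^ m) x) := by
  rw [pow_add, Equiv.Perm.mul_apply]

theorem pw1 {B : Type*} (σ : Equiv.Perm B) (n : ℕ) (x : B) :
    (σ ^ (n + 1)) x = (σ ^ n) (σ x) := by
  rw [pw, pow_one]

theorem pw1' {B : Type*} (σ : Equiv.Perm B) (n : ℕ) (x : B) :
    (σ ^ (n + 1)) x = σ ((σ ^ n) x) := by
  rw [add_comm, pw, pow_one]

theorem pinv {B : Type*} (σ : Equiv.Perm B) (i k : ℕ) (h : i ≤ k) (x : B) :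
    (σ⁻¹ ^ i) ((σ ^ k) x) = (σ ^ (k - i)) x := by
  obtain ⟨d, rfl⟩ := Nat.exists_eq_add_of_le h
  rw [pw, inv_pow, Nat.add_sub_cancel_left]
  exact (σ ^ i).symm_apply_apply _

theorem pret {B : Type*} [Fintype B] (σ : Equiv.Perm B) (x : B) :
    ∃ k, 0 < k ∧ (σ ^ k) x = x := by
  classical
  exact ⟨orderOf σ, orderOf_pos σ, by rw [pow_orderOf_eq_one]; rfl⟩

theorem pinj {B : Type*} (σ : Equiv.Perm B) (i d : ℕ) (x : B)
    (h : (σ ^ i) x = (σ ^ (i + d)) x) : (σ ^ d) x = x := by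
  rw [pw] at h
  exact ((σ ^ i).injective h).symm

theorem so_symm {B : Type*} [Fintype B] (σ : Equiv.Perm B) {x y : B} (h : sameOrbit σ x y) :
    sameOrbit σ y x := by
  obtain ⟨n, rfl⟩ := h
  obtain ⟨k, hk, h⟩ := pret σ x
  have hm : ∀ m, (σ ^ (k * m)) x = x := by
    intro m
    induction m with
    | zero => simp
    | succ m ih => rw [Nat.mul_succ, pw, h, ih]
  refine ⟨k * n - n, ?_⟩
  rw [← pw, Nat.sub_add_cancel (Nat.le_mul_of_pos_left n hk), hm]

theorem so_trans {B : Type*} (σ : Equiv.Perm B) {x y z : B} (h : sameOrbit σ x y)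
    (h' : sameOrbit σ y z) : sameOrbit σ x z := by
  obtain ⟨n, rfl⟩ := h
  obtain ⟨k, rfl⟩ := h'
  exact ⟨k + n, pw _ _ _ _⟩

theorem so_refl {B : Type*} (σ : Equiv.Perm B) (x : B) : sameOrbit σ x x := ⟨0, by simp⟩

theorem so_sub {B : Type*} (σ : Equiv.Perm B) (S : Set B) {x y : B}
    (h : sameOrbit σ x y) (hx : orbit σ x ⊆ S) : orbit σ y ⊆ S :=
  fun _ hz => hx (so_trans σ h hz)

theorem so_sub_iff {B : Type*} [Fintype B] (σ : Equiv.Perm B) (S : Set B) {x y : B}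
    (h : sameOrbit σ x y) : orbit σ x ⊆ S ↔ orbit σ y ⊆ S :=
  ⟨so_sub σ S h, so_sub σ S (so_symm σ h)⟩

theorem not_sub {B : Type*} (σ : Equiv.Perm B) (S : Set B) {x : B} (h : x ∉ S) :
    ¬ orbit σ x ⊆ S := fun h' => h (h' (so_refl σ x))

theorem ex_pos {B : Type*} [Fintype B] (σ : Equiv.Perm B) (S : Set B) {x : B}
    (h : ¬ orbit σ x ⊆ S) : ∃ i, 0 < i ∧ (σ ^ i) x ∉ S := by
  obtain ⟨y, ⟨n, rfl⟩, hy⟩ := Set.not_subset.1 h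
  obtain ⟨k, hk, h⟩ := pret σ x
  exact ⟨n + k, by omega, by rwa [pw, h]⟩

theorem mu_spec {B : Type*} [Fintype B] [DecidableEq B] (σ : Equiv.Perm B) (T : Set B) {x : B}
    (h : ¬ orbit σ x ⊆ T) : 0 < mu σ T x ∧ (σ ^ mu σ T x) x ∉ T ∧
      ∀ j, 0 < j → j < mu σ T x → (σ ^ j) x ∈ T := by
  rw [mu, if_neg h]
  have := Nat.sInf_mem (s := {i : ℕ | 0 < i ∧ (σ ^ i) x ∉ T}) (ex_pos σ T h)
  refine ⟨this.1, this.2, fun j hj hl => ?_⟩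
  by_contra hc
  exact Nat.notMem_of_lt_sInf hl ⟨hj, hc⟩

theorem mu_eq {B : Type*} [Fintype B] [DecidableEq B] (σ : Equiv.Perm B) (T : Set B) {x : B}
    (k : ℕ) (hk : 0 < k) (h1 : (σ ^ k) x ∉ T) (h2 : ∀ j, 0 < j → j < k → (σ ^ j) x ∈ T) :
    mu σ T x = k := by
  have hn : ¬ orbit σ x ⊆ T := fun h => h1 (h ⟨k, rfl⟩)
  obtain ⟨a, b, c⟩ := mu_spec σ T hn
  rcases lt_trichotomy (mu σ T x) k with h | h | h
  · exact absurd (h2 _ a h) b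
  · exact h
  · exact absurd (c _ hk h) h1

theorem nn_spec {B : Type*} [Fintype B] [DecidableEq B] (σ : Equiv.Perm B) (T : Set B) {x : B}
    (h : ¬ orbit σ x ⊆ tilde σ T) : 0 < nn σ T x ∧ (σ ^ nn σ T x) x ∉ tilde σ T :=
  Nat.sInf_mem (s := {i : ℕ | 0 < i ∧ (σ ^ i) x ∉ tilde σ T}) (ex_pos σ _ h)

theorem nn_le {B : Type*} [Fintype B] [DecidableEq B] (σ : Equiv.Perm B) (T : Set B) {x : B}
    (k : ℕ) (hk : 0 < k) (h : (σ ^ k) x ∉ tilde σ T) : nn σ T x ≤ k :=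
  Nat.sInf_le ⟨hk, h⟩

theorem not_T {B : Type*} [Fintype B] [DecidableEq B] (σ : Equiv.Perm B) (T : Set B) {x : B}
    (h : x ∉ tilde σ T) : x ∉ T := fun h' => h (Or.inl h')

theorem chain_card {B : Type*} [Fintype B] [DecidableEq B] (σ : Equiv.Perm B) (T : Set B) (x : B)
    (m : ℕ) (h1 : σ x ∉ T) (h2 : ∀ i ≤ m, (σ⁻¹ ^ i) x ∈ T) :
    Set.ncard {τ | ∃ i ≤ m, τ = (σ⁻¹ ^ i) x} = m + 1 := by
  have : {τ | ∃ i ≤ m, τ = (σ⁻¹ ^ i) x} = (fun i => (σ⁻¹ ^ i) x) '' (Finset.range (m+1) : Set ℕ) := by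
    ext τ
    simp only [Set.mem_ofPred_eq, Set.mem_image, Finset.coe_range, Set.mem_Iio, Nat.lt_succ_iff]
    constructor
    · rintro ⟨i, hi, rfl⟩; exact ⟨i, hi, rfl⟩
    · rintro ⟨i, hi, rfl⟩; exact ⟨i, hi, rfl⟩
  rw [this, Set.InjOn.ncard_image, Set.ncard_coe_finset, Finset.card_range]
  have key : ∀ i d, i + (d + 1) ≤ m → (σ⁻¹ ^ i) x ≠ (σ⁻¹ ^ (i + (d + 1))) x := by
    intro i d hd he
    have h3 := pinj σ⁻¹ i (d + 1) x he
    apply h1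
    have h4 : (σ⁻¹ ^ d) x = σ x := by
      conv_rhs => rw [← h3, pw1']
      simp
    rw [← h4]
    exact h2 _ (by omega)
  intro i hi j hj hij
  simp only [Finset.coe_range, Set.mem_Iio] at hi hj
  rcases lt_trichotomy i j with h | h | h
  · obtain ⟨d, rfl⟩ := Nat.exists_eq_add_of_lt h
    exact absurd hij (key i d (by omega))
  · exact h
  · obtain ⟨d, rfl⟩ := Nat.exists_eq_add_of_lt h
    exact absurd hij.symm (key j d (by omega))

theorem tilde_iff {B : Type*} [Fintype B] [DecidableEq B] (σ : Equiv.Perm B) (T : Set B) {x : B}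
    (hx : x ∉ T) : x ∈ tilde σ T ↔ Even (mu σ T x) := by
  constructor
  · intro h
    rcases h with h | h
    · exact absurd h hx
    · simp only [Set.mem_iUnion] at h
      obtain ⟨C, ⟨y, m, h1, h2, h3, rfl⟩, hC⟩ := h
      have hc := chain_card σ T y m h1 h3
      have hnc : x ∉ {τ | ∃ i ≤ m, τ = (σ⁻¹ ^ i) y} := by
        rintro ⟨i, hi, rfl⟩; exact hx (h3 i hi)
      rw [chainExt, hc] at hC
      split_ifs at hC with ho
      · rcases hC with hC | hC
        · exact absurd hC hnc
        · obtain ⟨_, ⟨i, hi, rfl⟩, rfl⟩ := hC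
          rw [← pw1'] at hx ⊢
          have him : i = m := by
            by_contra hne
            exact hx (h3 (i + 1) (by omega))
          subst him
          have e1 : mu σ T ((σ⁻¹ ^ (i + 1)) y) = i + 2 := by
            apply mu_eq
            · omega
            · have : (σ ^ (i + 2)) ((σ⁻¹ ^ (i + 1)) y) = σ y := by
                rw [pw1', inv_pow]
                exact congrArg σ ((σ ^ (i + 1)).apply_symm_apply _)
              rwa [this]
            · intro j hj hl
              have : (σ ^ j) ((σ⁻¹ ^ (i + 1)) y) = (σ⁻¹ ^ (i + 1 - j)) y := by
                have := pinv σ⁻¹ j (i + 1) (by omega) y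
                rwa [inv_inv] at this
              rw [this]
              exact h3 _ (by omega)
          rw [e1]
          have := ho.add_one
          exact this
      · exact absurd hC hnc
  · intro hev
    obtain ⟨a, b, c⟩ := mu_spec σ T (not_sub σ T hx)
    obtain ⟨r, hr⟩ := hev
    obtain ⟨m, hm⟩ : ∃ m, mu σ T x = m + 2 := ⟨mu σ T x - 2, by omega⟩
    rw [hm] at b c
    right
    simp only [Set.mem_iUnion]
    have g1 : σ ((σ ^ (m + 1)) x) ∉ T := by rwa [← pw1']
    have g3 : ∀ i ≤ m, (σ⁻¹ ^ i) ((σ ^ (m + 1)) x) ∈ T := by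
      intro i hi
      rw [pinv σ i (m + 1) (by omega)]
      exact c _ (by omega) (by omega)
    refine ⟨_, ⟨(σ ^ (m + 1)) x, m, g1, ?_, g3, rfl⟩, ?_⟩
    · rw [pinv σ _ _ le_rfl]; simpa using hx
    · have hc := chain_card σ T _ m g1 g3
      rw [chainExt, hc, if_pos ⟨r - 1, by omega⟩]
      right
      refine ⟨(σ⁻¹ ^ m) ((σ ^ (m + 1)) x), ⟨m, le_rfl, rfl⟩, ?_⟩
      rw [pinv σ _ _ (by omega)]
      simp

theorem eps_eq {B : Type*} [Fintype B] [DecidableEq B] (σ : Equiv.Perm B) (T : Set B) {x : B}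
    (h : ¬ orbit σ x ⊆ T) : epsT σ T x = (-1) ^ (mu σ T x - 1) := by
  rw [epsT, if_neg h]
  split_ifs with h1
  · rfl
  · have h2 := not_T σ T h1
    rw [tilde_iff σ T h2, Nat.not_even_iff_odd] at h1
    obtain ⟨r, hr⟩ := h1
    rw [hr, Nat.add_sub_cancel, pow_mul]; simp

theorem eps_le {B : Type*} [Fintype B] [DecidableEq B] (σ : Equiv.Perm B) (T : Set B) (x : B) :
    epsT σ T x ≤ 1 := by
  rw [epsT]
  split_ifs
  · norm_num
  · rcases neg_one_pow_eq_or ℚ (mu σ T x - 1) with h | h <;> rw [h] <;> norm_num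
  · norm_num

theorem eps_succ {B : Type*} [Fintype B] [DecidableEq B] (σ : Equiv.Perm B) (T : Set B) {x : B}
    (hx : σ x ∈ T) : epsT σ T x = - epsT σ T (σ x) := by
  have so : sameOrbit σ x (σ x) := ⟨1, by simp⟩
  by_cases h : orbit σ x ⊆ T
  · rw [epsT, epsT, if_pos h, if_pos (so_sub σ T so h)]; simp
  · have h' : ¬ orbit σ (σ x) ⊆ T := by rwa [← so_sub_iff σ T so]
    obtain ⟨a, b, c⟩ := mu_spec σ T h'
    have : mu σ T x = mu σ T (σ x) + 1 := by
      apply mu_eq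
      · omega
      · rwa [pw1]
      · intro j hj hl
        obtain ⟨j, rfl⟩ : ∃ i, j = i + 1 := ⟨j - 1, by omega⟩
        rw [pw1]
        rcases Nat.eq_zero_or_pos j with rfl | h0
        · simpa using hx
        · exact c j h0 (by omega)
    rw [eps_eq σ T h, eps_eq σ T h', this]
    obtain ⟨r, hr⟩ : ∃ i, mu σ T (σ x) = i + 1 := ⟨mu σ T (σ x) - 1, by omega⟩
    rw [hr]; simp [pow_succ]

theorem neg_spec {B : Type*} [Fintype B] [DecidableEq B] (σ : Equiv.Perm B) (T : Set B) {x : B}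
    (hx : x ∈ tilde σ T) (hx' : x ∉ T) :
    2 ≤ mu σ T x ∧ σ x ∈ T ∧ epsT σ T x = -1 ∧ epsT σ T (σ x) = 1 := by
  have h := not_sub σ T hx'
  obtain ⟨a, b, c⟩ := mu_spec σ T h
  obtain ⟨r, hr⟩ := (tilde_iff σ T hx').1 hx
  have h1 : σ x ∈ T := by simpa using c 1 one_pos (by omega)
  have h2 : epsT σ T x = -1 := by
    rw [eps_eq σ T h]
    exact Odd.neg_one_pow ⟨r - 1, by omega⟩
  refine ⟨by omega, h1, h2, ?_⟩
  have := eps_succ σ T h1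
  linarith

theorem eps_pos {B : Type*} [Fintype B] [DecidableEq B] (σ : Equiv.Perm B) (T : Set B) {x : B}
    (hx : x ∉ tilde σ T) : epsT σ T x = 1 := by
  rw [epsT, if_neg (not_sub σ T (not_T σ T hx)), if_neg hx]

theorem eps_Tscr {B : Type*} [Fintype B] [DecidableEq B] (σ : Equiv.Perm B) (T : Set B) {x : B}
    (hx : x ∈ Tscr σ T) : epsT σ T x = 1 := by
  rcases hx with h | ⟨y, ⟨h1, h2⟩, rfl⟩
  · exact eps_pos σ T h
  · exact (neg_spec σ T h1 h2).2.2.2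

/-- The functional of `N` terms starting at `a`. -/
noncomputable def FL {B : Type*} [Fintype B] [DecidableEq B] (σ : Equiv.Perm B) (p : ℕ) (T : Set B) (a : B) (N : ℕ) :
    (B → ℚ) →ₗ[ℚ] ℚ :=
  ∑ i ∈ Finset.range N, (epsT σ T ((σ ^ i) a) * (p : ℚ) ^ i) • LinearMap.proj ((σ ^ i) a)

theorem FL_apply {B : Type*} [Fintype B] [DecidableEq B] (σ : Equiv.Perm B) (p : ℕ) (T : Set B)
    (a : B) (N : ℕ) (κ : B → ℚ) : FL σ p T a N κ =
      ∑ i ∈ Finset.range N, epsT σ T ((σ ^ i) a) * (p : ℚ) ^ i * κ ((σ ^ i) a) := by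
  simp [FL]

theorem FL_e {B : Type*} [Fintype B] [DecidableEq B] (σ : Equiv.Perm B) (p : ℕ) (T : Set B)
    (a : B) (N : ℕ) (hN : ∀ d, 0 < d → d < N → (σ ^ d) a ≠ a) (i : ℕ) (hi : i < N) :
    FL σ p T a N (e ((σ ^ i) a)) = epsT σ T ((σ ^ i) a) * (p : ℚ) ^ i := by
  rw [FL_apply, Finset.sum_eq_single i]
  · simp [e]
  · intro j hj hji
    rw [Finset.mem_range] at hj
    have : (σ ^ j) a ≠ (σ ^ i) a := by
      intro h
      rcases lt_or_gt_of_ne hji with h' | h'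
      · obtain ⟨d, rfl⟩ := Nat.exists_eq_add_of_lt h'
        exact hN (d + 1) (by omega) (by omega) (pinj σ j (d + 1) a h)
      · obtain ⟨d, rfl⟩ := Nat.exists_eq_add_of_lt h'
        exact hN (d + 1) (by omega) (by omega) (pinj σ i (d + 1) a h.symm)
    simp [e, this]
  · intro h; exact absurd (Finset.mem_range.2 hi) h

theorem FL_e_zero {B : Type*} [Fintype B] [DecidableEq B] (σ : Equiv.Perm B) (p : ℕ) (T : Set B)
    (a : B) (N : ℕ) (τ : B) (h : ∀ i < N, (σ ^ i) a ≠ τ) :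
    FL σ p T a N (e τ) = 0 := by
  rw [FL_apply]
  apply Finset.sum_eq_zero
  intro i hi
  simp [e, h i (Finset.mem_range.1 hi)]

theorem FL_e_nonneg {B : Type*} [Fintype B] [DecidableEq B] (σ : Equiv.Perm B) (p : ℕ) (T : Set B)
    (a : B) (N : ℕ) (τ : B) (h : 0 ≤ epsT σ T τ) :
    0 ≤ FL σ p T a N (e τ) := by
  rw [FL_apply]
  apply Finset.sum_nonneg
  intro i hi
  by_cases h' : (σ ^ i) a = τ
  · rw [h']; simp only [e, if_true]; positivity
  · simp [e, h']

theorem FL_b {B : Type*} [Fintype B] [DecidableEq B] (σ : Equiv.Perm B) (p : ℕ) (T : Set B)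
    (a : B) (N : ℕ) (ha : a ∉ T) (hN : (σ ^ N) a ∉ T) (τ : B) (hτ : τ ∈ T) :
    FL σ p T a N (bsimple σ p τ) = 0 := by
  have key : ∀ n, FL σ p T a n (bsimple σ p τ) =
      - epsT σ T τ * (if (σ ^ n) a = τ then (p : ℚ) ^ n else 0) := by
    intro n
    induction n with
    | zero =>
      have : a ≠ τ := fun h => ha (h ▸ hτ)
      simp [FL_apply, this]
    | succ n ih =>
      rw [FL_apply, Finset.sum_range_succ, ← FL_apply, ih]
      have h1 : (σ ^ (n + 1)) a = τ ↔ (σ ^ n) a = σ⁻¹ τ := by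
        rw [pw1', Equiv.Perm.eq_inv_iff_eq]
      have h3 : epsT σ T (σ⁻¹ τ) = - epsT σ T τ := by
        have := eps_succ σ T (x := σ⁻¹ τ) (by simpa using hτ)
        simpa using this
      simp only [bsimple, Pi.add_apply, Pi.smul_apply, e, h1, smul_eq_mul]
      generalize σ⁻¹ τ = ρ at *
      generalize (σ ^ n) a = y at *
      by_cases h2 : y = ρ
      · subst h2
        by_cases h4 : y = τ
        · subst h4
          have h0 : epsT σ T y = 0 := by linarith
          simp [h0]
        · simp [h4, h3, pow_succ]; ring
      · by_cases h4 : y = τ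
        · subst h4; simp [h2]
        · simp [h2, h4]
  rw [key, if_neg]
  · simp
  · intro h; exact hN (h ▸ hτ)

/-- The period of `a`. -/
noncomputable def per {B : Type*} (σ : Equiv.Perm B) (a : B) : ℕ := steps0 σ a (σ⁻¹ a) + 1

theorem s0_spec {B : Type*} (σ : Equiv.Perm B) {a τ : B} (h : sameOrbit σ a τ) :
    (σ ^ steps0 σ a τ) a = τ :=
  Nat.sInf_mem (s := {n : ℕ | (σ ^ n) a = τ}) h

theorem s0_le {B : Type*} (σ : Equiv.Perm B) {a τ : B} (k : ℕ) (h : (σ ^ k) a = τ) :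
    steps0 σ a τ ≤ k := Nat.sInf_le h

theorem st_le {B : Type*} (σ : Equiv.Perm B) {a τ : B} (k : ℕ) (hk : 0 < k) (h : (σ ^ k) a = τ) :
    steps σ a τ ≤ k := Nat.sInf_le ⟨hk, h⟩

theorem st_spec {B : Type*} [Fintype B] (σ : Equiv.Perm B) {a τ : B} (h : sameOrbit σ a τ) :
    0 < steps σ a τ ∧ (σ ^ steps σ a τ) a = τ := by
  apply Nat.sInf_mem (s := {n : ℕ | 0 < n ∧ (σ ^ n) a = τ})
  obtain ⟨n, rfl⟩ := h
  obtain ⟨k, hk, h⟩ := pret σ a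
  exact ⟨n + k, by omega, by rw [pw, h]⟩

theorem per_eq {B : Type*} [Fintype B] (σ : Equiv.Perm B) (a : B) : (σ ^ per σ a) a = a := by
  have : sameOrbit σ a (σ⁻¹ a) := so_symm σ ⟨1, by simp⟩
  rw [per, pw1', s0_spec σ this]; simp

theorem per_min {B : Type*} (σ : Equiv.Perm B) (a : B) (d : ℕ) (hd : 0 < d) (h : d < per σ a) :
    (σ ^ d) a ≠ a := by
  intro he
  obtain ⟨d, rfl⟩ : ∃ i, d = i + 1 := ⟨d - 1, by omega⟩
  have : (σ ^ d) a = σ⁻¹ a := by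
    rw [Equiv.Perm.eq_inv_iff_eq, ← pw1', he]
  have := s0_le σ d this
  unfold per at h
  omega

theorem s0_lt {B : Type*} [Fintype B] (σ : Equiv.Perm B) {a τ : B} (h : sameOrbit σ a τ) :
    steps0 σ a τ < per σ a := by
  by_contra hc
  push Not at hc
  have h1 := s0_spec σ h
  obtain ⟨d, hd⟩ := Nat.exists_eq_add_of_le hc
  rw [hd, add_comm, pw, per_eq] at h1
  have := s0_le σ d h1
  have : 0 < per σ a := Nat.succ_pos _
  omega

theorem s0_eq {B : Type*} [Fintype B] (σ : Equiv.Perm B) (a : B) (k : ℕ) (hk : k < per σ a) :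
    steps0 σ a ((σ ^ k) a) = k := by
  have h1 := s0_spec σ (a := a) (τ := (σ ^ k) a) ⟨k, rfl⟩
  have h2 := s0_le σ (a := a) (τ := (σ ^ k) a) k rfl
  by_contra hne
  obtain ⟨d, hd⟩ := Nat.exists_eq_add_of_le h2
  have h3 : (σ ^ steps0 σ a ((σ ^ k) a)) a = (σ ^ (steps0 σ a ((σ ^ k) a) + d)) a := by
    rw [← hd]; exact h1
  exact per_min σ a d (by omega) (by omega) (pinj σ _ d a h3)

/-- The functional `L_{T,δ}` as a linear map. -/
noncomputable def Lam {B : Type*} [Fintype B] [DecidableEq B] (σ : Equiv.Perm B) (p : ℕ)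
    (T : Set B) (δ : B) : (B → ℚ) →ₗ[ℚ] ℚ :=
  if δ ∈ tilde σ T then FL σ p T δ (mu σ T δ)
  else FL σ p T ((σ ^ mu σ T δ) δ) (per σ ((σ ^ mu σ T δ) δ))

theorem mu_inj {B : Type*} [Fintype B] [DecidableEq B] (σ : Equiv.Perm B)
    (T : Set B) {δ : B} (h : δ ∉ T) (d : ℕ) (hd : 0 < d) (hl : d < mu σ T δ) : (σ ^ d) δ ≠ δ := by
  intro he
  have := (mu_spec σ T (not_sub σ T h)).2.2 d hd hl
  rw [he] at this
  exact h this

theorem LT_eq {B : Type*} [Fintype B] [DecidableEq B] (σ : Equiv.Perm B) (p : ℕ)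
    (T : Set B) {δ : B} (h : δ ∉ T) (κ : B → ℚ) : LT σ p T δ κ = Lam σ p T δ κ := by
  unfold LT Lam
  split_ifs with h1
  · rw [FL_apply, Lfun]
    obtain ⟨a, b, c⟩ := mu_spec σ T (not_sub σ T h)
    have : steps0 σ δ ((σ ^ (mu σ T δ - 1)) δ) + 1 = mu σ T δ := by
      have h2 := s0_le σ (a := δ) (τ := ((σ ^ (mu σ T δ - 1)) δ)) _ rfl
      have h3 := s0_spec σ (a := δ) (τ := ((σ ^ (mu σ T δ - 1)) δ)) ⟨_, rfl⟩
      by_contra hne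
      apply b
      have h4 : (σ ^ mu σ T δ) δ = (σ ^ (steps0 σ δ ((σ ^ (mu σ T δ - 1)) δ) + 1)) δ := by
        rw [pw1', h3, ← pw1', Nat.sub_add_cancel a]
      rw [h4]
      exact c _ (by omega) (by omega)
    rw [this]
  · rw [FL_apply, Lfun1, Lfun, per]

theorem Lam_b {B : Type*} [Fintype B] [DecidableEq B] (σ : Equiv.Perm B) (p : ℕ)
    (T : Set B) {δ τ : B} (h : δ ∉ T) (hτ : τ ∈ T) : Lam σ p T δ (bsimple σ p τ) = 0 := by
  obtain ⟨a, b, c⟩ := mu_spec σ T (not_sub σ T h)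
  unfold Lam
  split_ifs with h1
  · exact FL_b σ p T _ _ h b τ hτ
  · exact FL_b σ p T _ _ b (by rwa [per_eq]) τ hτ

theorem Lam_pos_e {B : Type*} [Fintype B] [DecidableEq B] (σ : Equiv.Perm B) (p : ℕ)
    (T : Set B) {δ τ : B} (h : δ ∉ tilde σ T) (hτ : sameOrbit σ δ τ) :
    Lam σ p T δ (e τ) = epsT σ T τ * (p : ℚ) ^ steps0 σ ((σ ^ mu σ T δ) δ) τ := by
  have hs : sameOrbit σ ((σ ^ mu σ T δ) δ) τ := so_trans σ (so_symm σ ⟨_, rfl⟩) hτ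
  rw [Lam, if_neg h]
  have := FL_e σ p T _ _ (per_min σ ((σ ^ mu σ T δ) δ)) _ (s0_lt σ hs)
  rwa [s0_spec σ hs] at this

theorem Lam_e_zero {B : Type*} [Fintype B] [DecidableEq B] (σ : Equiv.Perm B) (p : ℕ)
    (T : Set B) {δ τ : B} (hτ : ¬ sameOrbit σ δ τ) : Lam σ p T δ (e τ) = 0 := by
  unfold Lam
  split_ifs with h1
  · apply FL_e_zero
    intro i _ h
    exact hτ ⟨i, h⟩
  · apply FL_e_zero
    intro i _ h
    exact hτ ⟨i + mu σ T δ, by rw [pw]; exact h⟩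

theorem Lam_hvec {B : Type*} [Fintype B] [DecidableEq B] (σ : Equiv.Perm B) (p : ℕ)
    (T : Set B) (δ β β' : B) : Lam σ p T δ (hvec σ p β β') =
      - Lam σ p T δ (e β) + (p : ℚ) ^ steps σ β' β * Lam σ p T δ (e β') := by
  simp [hvec]

theorem Lam_neg_e {B : Type*} [Fintype B] [DecidableEq B] (σ : Equiv.Perm B) (p : ℕ)
    (T : Set B) {δ β : B} (hδ : δ ∉ T) (h : δ ∈ tilde σ T) (hβ : β ∉ T) :
    Lam σ p T δ (e β) = if β = δ then -1 else 0 := by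
  obtain ⟨a, b, c⟩ := mu_spec σ T (not_sub σ T hδ)
  rw [Lam, if_pos h]
  split_ifs with h1
  · subst h1
    have := FL_e σ p T β _ (mu_inj σ T hδ) 0 a
    simpa [(neg_spec σ T h hδ).2.2.1] using this
  · apply FL_e_zero
    rintro i hi rfl
    rcases Nat.eq_zero_or_pos i with rfl | h0
    · exact h1 (by simp)
    · exact hβ (c i h0 hi)

theorem Lam_gen_nonneg {B : Type*} [Fintype B] [DecidableEq B] (σ : Equiv.Perm B) (p : ℕ)
    (hp : 1 < p) (T : Set B) {δ β β' : B} (hδ : δ ∉ T) (hβ : β ∉ T) (hβ' : β' ∈ Tscr σ T)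
    (ho : sameOrbit σ β β') : 0 ≤ Lam σ p T δ (hvec σ p β β') := by
  rw [Lam_hvec]
  have hp1 : (1 : ℚ) ≤ p := by exact_mod_cast hp.le
  have he := eps_Tscr σ T hβ'
  by_cases h : δ ∈ tilde σ T
  · rw [Lam_neg_e σ p T hδ h hβ]
    have h1 : 0 ≤ Lam σ p T δ (e β') := by
      rw [Lam, if_pos h]
      exact FL_e_nonneg _ _ _ _ _ _ (by rw [he]; norm_num)
    have h2 : 0 ≤ (p : ℚ) ^ steps σ β' β * Lam σ p T δ (e β') := by positivity
    split_ifs <;> linarith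
  · by_cases hs : sameOrbit σ δ β
    · have hs' := so_trans σ hs ho
      rw [Lam_pos_e σ p T h hs, Lam_pos_e σ p T h hs', he, one_mul, ← pow_add]
      have h1 : steps0 σ ((σ ^ mu σ T δ) δ) β ≤
          steps σ β' β + steps0 σ ((σ ^ mu σ T δ) δ) β' := by
        apply s0_le
        rw [pw, s0_spec, (st_spec σ (so_symm σ ho)).2]
        exact so_trans σ (so_symm σ ⟨_, rfl⟩) hs'
      have h2 := pow_le_pow_right₀ hp1 h1
      have h3 : epsT σ T β * (p : ℚ) ^ steps0 σ ((σ ^ mu σ T δ) δ) β ≤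
          1 * (p : ℚ) ^ steps0 σ ((σ ^ mu σ T δ) δ) β :=
        mul_le_mul_of_nonneg_right (eps_le σ T β) (by positivity)
      linarith
    · have hs' : ¬ sameOrbit σ δ β' := fun h => hs (so_trans σ h (so_symm σ ho))
      rw [Lam_e_zero σ p T hs, Lam_e_zero σ p T hs']; simp

/-- The basis vectors. -/
noncomputable def gv {B : Type*} [Fintype B] [DecidableEq B] (σ : Equiv.Perm B) (p : ℕ)
    (T : Set B) (β : B) : B → ℚ :=
  if β ∈ T then bsimple σ p β
  else if orbit σ β ⊆ tilde σ T then hvec σ p β (σ β)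
  else if β ∈ tilde σ T then hvec σ p ((σ ^ nn σ T β) β) (σ β)
  else hvec σ p ((σ ^ nn σ T β) β) β

theorem gv_mem {B : Type*} [Fintype B] [DecidableEq B] (σ : Equiv.Perm B) (p : ℕ)
    (T : Set B) {β : B} (hβ : β ∉ T) : ∃ γ γ', γ ∉ T ∧ γ' ∈ Tscr σ T ∧ sameOrbit σ γ γ' ∧
      gv σ p T β = hvec σ p γ γ' := by
  unfold gv
  rw [if_neg hβ]
  have h1 : sameOrbit σ β (σ β) := ⟨1, by simp⟩
  split_ifs with h2 h3
  · exact ⟨β, σ β, hβ, Or.inr ⟨β, ⟨h2 (so_refl σ β), hβ⟩, rfl⟩, h1, rfl⟩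
  · exact ⟨_, σ β, not_T σ T (nn_spec σ T h2).2, Or.inr ⟨β, ⟨h3, hβ⟩, rfl⟩,
      so_trans σ (so_symm σ ⟨_, rfl⟩) h1, rfl⟩
  · exact ⟨_, β, not_T σ T (nn_spec σ T h2).2, Or.inl h3, so_symm σ ⟨_, rfl⟩, rfl⟩

theorem Lam_gv_pos {B : Type*} [Fintype B] [DecidableEq B] (σ : Equiv.Perm B) (p : ℕ)
    (hp : 1 < p) (T : Set B) {δ : B} (hδ : δ ∉ T) : 0 < Lam σ p T δ (gv σ p T δ) := by
  obtain ⟨a, b, c⟩ := mu_spec σ T (not_sub σ T hδ)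
  have hp1 : (1 : ℚ) < p := by exact_mod_cast hp
  by_cases h : δ ∈ tilde σ T
  · obtain ⟨n1, n2, n3, n4⟩ := neg_spec σ T h hδ
    have e1 : Lam σ p T δ (e (σ δ)) = p := by
      have := FL_e σ p T δ _ (mu_inj σ T hδ) 1 n1
      rw [Lam, if_pos h]
      simpa [n4] using this
    have key : ∀ β, β ∉ T → 0 < Lam σ p T δ (hvec σ p β (σ δ)) := by
      intro β hβ
      rw [Lam_hvec, e1, Lam_neg_e σ p T hδ h hβ]
      have : 0 < (p : ℚ) ^ steps σ (σ δ) β * p := by positivity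
      split_ifs <;> linarith
    unfold gv
    rw [if_neg hδ]
    split_ifs with h2
    · exact key _ hδ
    · exact key _ (not_T σ T (nn_spec σ T h2).2)
  · have h2 := not_sub σ (tilde σ T) h
    obtain ⟨m1, m2⟩ := nn_spec σ T h2
    rw [gv, if_neg hδ, if_neg h2, if_neg h, Lam_hvec, Lam_pos_e σ p T h ⟨_, rfl⟩,
      Lam_pos_e σ p T h (so_refl σ δ), eps_pos σ T h, eps_pos σ T m2, one_mul, one_mul, ← pow_add]
    have k1 : mu σ T δ ≤ nn σ T δ := by
      by_contra hc
      exact not_T σ T m2 (c _ m1 (by omega))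
    have k2 : steps0 σ ((σ ^ mu σ T δ) δ) ((σ ^ nn σ T δ) δ) ≤ nn σ T δ - mu σ T δ := by
      apply s0_le
      rw [← pw, Nat.sub_add_cancel k1]
    have k3 : nn σ T δ ≤ steps σ δ ((σ ^ nn σ T δ) δ) := by
      have := st_spec σ (a := δ) (τ := (σ ^ nn σ T δ) δ) ⟨_, rfl⟩
      exact nn_le σ T _ this.1 (by rw [this.2]; exact m2)
    have := pow_lt_pow_right₀ hp1 (show steps0 σ ((σ ^ mu σ T δ) δ) ((σ ^ nn σ T δ) δ) <
      steps σ δ ((σ ^ nn σ T δ) δ) + steps0 σ ((σ ^ mu σ T δ) δ) δ by omega)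
    linarith

theorem Lam_gv_zero {B : Type*} [Fintype B] [DecidableEq B] (σ : Equiv.Perm B) (p : ℕ)
    (hp : 1 < p) (T : Set B) {δ β : B} (hδ : δ ∉ T) (hβ : β ∉ T) (hne : β ≠ δ) :
    Lam σ p T δ (gv σ p T β) = 0 := by
  obtain ⟨a, b, c⟩ := mu_spec σ T (not_sub σ T hδ)
  have hp1 : (1 : ℚ) ≤ p := by exact_mod_cast hp.le
  by_cases h : δ ∈ tilde σ T
  · have e1 : σ β ∈ T → Lam σ p T δ (e (σ β)) = 0 := by
      intro hb
      rw [Lam, if_pos h]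
      apply FL_e_zero
      intro i hi he
      rcases Nat.eq_zero_or_pos i with rfl | h0
      · simp only [pow_zero, Equiv.Perm.coe_one, id_eq] at he
        rw [he] at hδ; exact hδ hb
      · obtain ⟨i, rfl⟩ : ∃ j, i = j + 1 := ⟨i - 1, by omega⟩
        rw [pw1'] at he
        have he := σ.injective he
        rcases Nat.eq_zero_or_pos i with rfl | h0
        · exact hne (by simpa using he.symm)
        · exact hβ (he ▸ c i h0 (by omega))
    unfold gv
    rw [if_neg hβ]
    split_ifs with h2 h3
    · rw [Lam_hvec, Lam_neg_e σ p T hδ h hβ, if_neg hne,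
        e1 (neg_spec σ T (h2 (so_refl σ β)) hβ).2.1]; simp
    · have h4 := (nn_spec σ T h2).2
      rw [Lam_hvec, Lam_neg_e σ p T hδ h (not_T σ T h4), if_neg (show (σ ^ nn σ T β) β ≠ δ from fun h' => h4 (by rw [h']; exact h)),
        e1 (neg_spec σ T h3 hβ).2.1]; simp
    · have h4 := (nn_spec σ T h2).2
      rw [Lam_hvec, Lam_neg_e σ p T hδ h (not_T σ T h4), if_neg (show (σ ^ nn σ T β) β ≠ δ from fun h' => h4 (by rw [h']; exact h)),
        Lam_neg_e σ p T hδ h hβ, if_neg hne]; simp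
  · by_cases hs : sameOrbit σ δ β
    · have h2 : ¬ orbit σ β ⊆ tilde σ T := fun h' => h (h' (so_symm σ hs))
      obtain ⟨m1, m2⟩ := nn_spec σ T h2
      have hsn : sameOrbit σ δ ((σ ^ nn σ T β) β) := so_trans σ hs ⟨_, rfl⟩
      have hss : sameOrbit σ δ (σ β) := so_trans σ hs ⟨1, by simp⟩
      -- positions relative to the start
      have ha : sameOrbit σ ((σ ^ mu σ T δ) δ) β := so_trans σ (so_symm σ ⟨_, rfl⟩) hs
      have j1 := s0_spec σ ha
      have j2 := s0_lt σ ha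
      have d0 : sameOrbit σ ((σ ^ mu σ T δ) δ) δ := so_symm σ ⟨_, rfl⟩
      have d1 := s0_spec σ d0
      have d2 := s0_lt σ d0
      set A := (σ ^ mu σ T δ) δ with hA
      set j := steps0 σ A β with hj
      set k := steps0 σ A δ with hk
      have hjk : j < k := by
        by_contra hc
        obtain ⟨d, hd⟩ := Nat.exists_eq_add_of_le (not_lt.1 hc)
        have hb : (σ ^ d) δ = β := by rw [← j1, hd, add_comm, pw, d1]
        rcases Nat.eq_zero_or_pos d with rfl | h0
        · exact hne (by simpa using hb.symm)
        · have hdm : mu σ T δ ≤ d := by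
            by_contra hc'
            exact hβ (hb ▸ c d h0 (by omega))
          have : (σ ^ (d - mu σ T δ)) A = β := by
            rw [hA, ← pw, Nat.sub_add_cancel hdm, hb]
          have := s0_le σ _ this
          omega
      have hnk : nn σ T β ≤ k - j := by
        apply nn_le σ T _ (by omega)
        have : (σ ^ (k - j)) β = δ := by rw [← j1, ← pw, Nat.sub_add_cancel hjk.le, d1]
        rwa [this]
      have hnx : steps0 σ A ((σ ^ nn σ T β) β) = nn σ T β + j := by
        have := s0_eq σ A (nn σ T β + j) (by omega)
        rwa [pw, j1] at this
      obtain ⟨γ, γ', g1, g2, g3, g4⟩ := gv_mem σ p T hβ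
      have hge := Lam_gen_nonneg σ p hp T hδ g1 g2 g3
      rw [← g4] at hge
      refine le_antisymm ?_ hge
      rw [gv, if_neg hβ, if_neg h2]
      split_ifs with h3
      · obtain ⟨n1, n2, n3, n4⟩ := neg_spec σ T h3 hβ
        rw [Lam_hvec, Lam_pos_e σ p T h hsn, Lam_pos_e σ p T h hss, n4, eps_pos σ T m2, ← hA, hnx,
          one_mul, one_mul, ← pow_add]
        have q1 : steps0 σ A (σ β) ≤ j + 1 := s0_le σ _ (by rw [pw1', j1])
        have q0 : 2 ≤ nn σ T β := by
          by_contra hc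
          have : nn σ T β = 1 := by omega
          rw [this] at m2
          exact not_T σ T m2 (by simpa using n2)
        have q2 : steps σ (σ β) ((σ ^ nn σ T β) β) ≤ nn σ T β - 1 := by
          apply st_le σ _ (by omega)
          rw [← pw1, Nat.sub_add_cancel (by omega)]
        have := pow_le_pow_right₀ hp1 (show steps σ (σ β) ((σ ^ nn σ T β) β) + steps0 σ A (σ β) ≤
          nn σ T β + j by omega)
        linarith
      · rw [Lam_hvec, Lam_pos_e σ p T h hsn, Lam_pos_e σ p T h hs, eps_pos σ T h3,
          eps_pos σ T m2, ← hA, hnx, one_mul, one_mul, ← pow_add, ← hj]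
        have q2 : steps σ β ((σ ^ nn σ T β) β) ≤ nn σ T β := st_le σ _ m1 rfl
        have := pow_le_pow_right₀ hp1 (show steps σ β ((σ ^ nn σ T β) β) + j ≤
          nn σ T β + j by omega)
        linarith
    · have z : ∀ τ, sameOrbit σ β τ → Lam σ p T δ (e τ) = 0 := fun τ hτ =>
        Lam_e_zero σ p T (fun h' => hs (so_trans σ h' (so_symm σ hτ)))
      have z1 := z β (so_refl σ β)
      have z2 := z (σ β) ⟨1, by simp⟩
      have z3 := z ((σ ^ nn σ T β) β) ⟨_, rfl⟩
      unfold gv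
      rw [if_neg hβ]
      split_ifs <;> rw [Lam_hvec] <;> simp [z1, z2, z3]

theorem b_indep {B : Type*} [Fintype B] [DecidableEq B] (σ : Equiv.Perm B) (p : ℕ)
    (hp : 1 < p) (c : B → ℚ) (h : ∑ τ, c τ • bsimple σ p τ = 0) : c = 0 := by
  have h1 : ∀ τ, c τ + p * c (σ τ) = 0 := by
    intro τ
    have h2 := congrFun h τ
    simp only [bsimple, Finset.sum_apply, Pi.smul_apply, Pi.add_apply, e, smul_eq_mul,
      Pi.zero_apply, mul_add, Finset.sum_add_distrib] at h2
    rw [Finset.sum_eq_single τ, Finset.sum_eq_single (σ τ)] at h2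
    · rw [if_pos rfl, if_pos (by simp)] at h2
      linarith
    · intro b _ hb
      rw [if_neg]; · simp
      intro h; apply hb; rw [h]; simp
    · simp
    · intro b _ hb
      rw [if_neg (Ne.symm hb)]; simp
    · simp
  by_cases hB : Nonempty B
  · obtain ⟨m, hm⟩ := Finite.exists_max (fun τ => |c τ|)
    have h3 := h1 (σ⁻¹ m)
    have h4 : σ (σ⁻¹ m) = m := by simp
    rw [h4] at h3
    have h5 := hm (σ⁻¹ m)
    have h6 : c (σ⁻¹ m) = - (p * c m) := by linarith
    simp only [h6, abs_neg, abs_mul, Nat.abs_cast] at h5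
    have h7 : (1 : ℚ) < p := by exact_mod_cast hp
    have h8 : |c m| = 0 := by nlinarith [abs_nonneg (c m)]
    ext τ
    have := hm τ
    simp only [h8] at this
    exact abs_nonpos_iff.1 this
  · ext τ; exact absurd ⟨τ⟩ hB

theorem Lam_sum {B : Type*} [Fintype B] [DecidableEq B] (σ : Equiv.Perm B) (p : ℕ)
    (hp : 1 < p) (T : Set B) {δ : B} (hδ : δ ∉ T) (c : B → ℚ) :
    Lam σ p T δ (∑ τ, c τ • gv σ p T τ) = c δ * Lam σ p T δ (gv σ p T δ) := by
  rw [map_sum, Finset.sum_eq_single δ]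
  · simp
  · intro β _ hne
    rw [map_smul]
    by_cases hβ : β ∈ T
    · rw [gv, if_pos hβ, Lam_b σ p T hδ hβ]; simp
    · rw [Lam_gv_zero σ p hp T hδ hβ hne]; simp
  · simp

theorem gv_indep {B : Type*} [Fintype B] [DecidableEq B] (σ : Equiv.Perm B) (p : ℕ)
    (hp : 1 < p) (T : Set B) : LinearIndependent ℚ (gv σ p T) := by
  rw [Fintype.linearIndependent_iff]
  intro c hc
  have h1 : ∀ δ, δ ∉ T → c δ = 0 := by
    intro δ hδ
    have h2 := Lam_sum σ p hp T hδ c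
    rw [hc, map_zero] at h2
    have := Lam_gv_pos σ p hp T hδ
    rcases mul_eq_zero.1 h2.symm with h | h
    · exact h
    · exact absurd h this.ne'
  have h2 : ∑ τ, c τ • bsimple σ p τ = 0 := by
    rw [← hc]
    apply Finset.sum_congr rfl
    intro τ _
    by_cases h : τ ∈ T
    · rw [gv, if_pos h]
    · rw [h1 τ h]; simp
  exact fun i => congrFun (b_indep σ p hp c h2) i

end GO

/-- For every `T ⊆ 𝔹`, `𝒟_T = {κ ∈ ℚ^𝔹 : L_{T,β}(κ) ≥ 0 for all β ∈ 𝔹 − T}`. -/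
theorem statement2 {B : Type*} [Fintype B] [DecidableEq B] [Nonempty B]
    (σ : Equiv.Perm B) (p : ℕ) (hp : p.Prime) (T : Set B) :
    GO.D σ p T = {κ : B → ℚ | ∀ β, β ∉ T → 0 ≤ GO.LT σ p T β κ} := by
  have hp1 := hp.one_lt
  apply Set.Subset.antisymm
  · rintro _ ⟨n, c, v, hc, hv, rfl⟩ δ hδ
    rw [GO.LT_eq σ p T hδ, map_sum]
    apply Finset.sum_nonneg
    intro i _
    rw [map_smul, smul_eq_mul]
    apply mul_nonneg (hc i)
    rcases hv i with ⟨β, β', h1, h2, h3, h4⟩ | ⟨β, h1, h2⟩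
    · rw [h4]; exact GO.Lam_gen_nonneg σ p hp1 T hδ h1 h2 h3
    · have h3 := GO.Lam_b σ p T hδ h1
      rcases h2 with h2 | h2 <;> rw [h2]
      · exact h3.ge
      · rw [map_neg, h3, neg_zero]
  · intro κ hκ
    have hli := GO.gv_indep σ p hp1 T
    have hsp := hli.span_eq_top_of_card_eq_finrank' (by simp)
    have hm : κ ∈ Submodule.span ℚ (Set.range (GO.gv σ p T)) := by rw [hsp]; trivial
    obtain ⟨c, hc⟩ := (Submodule.mem_span_range_iff_exists_fun ℚ).1 hm
    have hpos : ∀ δ, δ ∉ T → 0 ≤ c δ := by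
      intro δ hδ
      have h1 := hκ δ hδ
      rw [GO.LT_eq σ p T hδ, ← hc, GO.Lam_sum σ p hp1 T hδ] at h1
      exact nonneg_of_mul_nonneg_left h1 (GO.Lam_gv_pos σ p hp1 T hδ)
    let E := (Fintype.equivFin B).symm
    refine ⟨Fintype.card B, fun i => |c (E i)|,
      fun i => if 0 ≤ c (E i) then GO.gv σ p T (E i) else - GO.gv σ p T (E i),
      fun i => abs_nonneg _, ?_, ?_⟩
    · intro i
      by_cases hT : E i ∈ T
      · right
        refine ⟨E i, hT, ?_⟩
        dsimp only
        rw [GO.gv, if_pos hT]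
        split_ifs <;> simp
      · left
        dsimp only
        rw [if_pos (hpos _ hT)]
        obtain ⟨γ, γ', g1, g2, g3, g4⟩ := GO.gv_mem σ p T hT
        exact ⟨γ, γ', g1, g2, g3, g4⟩
    · rw [← hc, ← E.sum_comp]
      apply Finset.sum_congr rfl
      intro i _
      dsimp only
      split_ifs with h
      · rw [abs_of_nonneg h]
      · rw [abs_of_neg (not_le.1 h)]; simp
end
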